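/- Assume that (x,y) = γ̃x + γ̃y + α is a decoupling of (x,y) in the orbit, and let H ∈ ℂ(X,Y,t) be a regular fraction. Then the following are equivalent: (1) H admits a Galois decoupling; (2) H_α = 0; (3) H_{(x,y)} = H_{γ̃x} + H_{γ̃y} is a Galois decoupling of H, i.e. H_{γ̃x} ∈ k(x) and H_{γ̃y} ∈ k(y). -/

import Mathlib

open IntermediateField
open scoped BigOperators Classical

set_option synthInstance.maxHeartbeats 1000000
set_option maxHeartbeats 1600000

noncomputable section

namespace QuadrantWalk

variable {K : Type} [Field K] [Algebra ℂ K]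

/-- Evaluation of the step (Laurent) polynomial `S(X,Y) = ∑ w_{i,j} X^i Y^j`
    at a pair of elements of a field. -/
def stepEval (St : Finset (ℤ × ℤ)) (w : ℤ × ℤ → ℂ) (u v : K) : K :=
  ∑ p ∈ St, algebraMap ℂ K (w p) * u ^ p.1 * v ^ p.2

/-- The step polynomial involves both `X` and `Y`. -/
def NotUnivariate (St : Finset (ℤ × ℤ)) : Prop :=
  (∃ p ∈ St, ∃ q ∈ St, p.1 ≠ q.1) ∧ ∃ p ∈ St, ∃ q ∈ St, p.2 ≠ q.2

/-- The kernel polynomial `K̃(X,Y,t) = X^mx * Y^my * (1 - t·S(X,Y))` as an element of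
`ℂ[X,Y,t]`, with variables `0 ↦ X`, `1 ↦ Y`, `2 ↦ t`. -/
def kernelPoly (St : Finset (ℤ × ℤ)) (w : ℤ × ℤ → ℂ) (mx my : ℕ) :
    MvPolynomial (Fin 3) ℂ :=
  MvPolynomial.X 0 ^ mx * MvPolynomial.X 1 ^ my -
    MvPolynomial.X 2 *
      ∑ p ∈ St, MvPolynomial.C (w p) *
        MvPolynomial.X 0 ^ (p.1 + (mx : ℤ)).toNat *
        MvPolynomial.X 1 ^ (p.2 + (my : ℤ)).toNat

/-- `-mx` (resp. `-my`) is the smallest `X`-exponent (resp. `Y`-exponent) of the model. -/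
structure ExponentBounds (St : Finset (ℤ × ℤ)) (mx my : ℕ) : Prop where
  lowerX : ∀ p ∈ St, -(mx : ℤ) ≤ p.1
  lowerY : ∀ p ∈ St, -(my : ℤ) ≤ p.2
  attainX : ∃ p ∈ St, p.1 = -(mx : ℤ)
  attainY : ∃ p ∈ St, p.2 = -(my : ℤ)

/-- `x`-adjacency : equal first coordinates and equal values of `S`. -/
def XAdj (St : Finset (ℤ × ℤ)) (w : ℤ × ℤ → ℂ) (a b : K × K) : Prop :=
  a.1 = b.1 ∧ stepEval St w a.1 a.2 = stepEval St w b.1 b.2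

/-- `y`-adjacency : equal second coordinates and equal values of `S`. -/
def YAdj (St : Finset (ℤ × ℤ)) (w : ℤ × ℤ → ℂ) (a b : K × K) : Prop :=
  a.2 = b.2 ∧ stepEval St w a.1 a.2 = stepEval St w b.1 b.2

/-- Adjacency. -/
def Adj (St : Finset (ℤ × ℤ)) (w : ℤ × ℤ → ℂ) (a b : K × K) : Prop :=
  XAdj St w a b ∨ YAdj St w a b

/-- The orbit of the walk: the equivalence class of `(x,y)` under the
reflexive-transitive closure of adjacency. -/
def orbit (St : Finset (ℤ × ℤ)) (w : ℤ × ℤ → ℂ) (x y : K) : Set (K × K) :=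
  {a | Relation.ReflTransGen (Adj St w) (x, y) a}

/-- `k = ℂ(S(x,y))`. -/
def kF (St : Finset (ℤ × ℤ)) (w : ℤ × ℤ → ℂ) (x y : K) : IntermediateField ℂ K :=
  adjoin ℂ {stepEval St w x y}

/-- `k(x) = ℂ(x, S(x,y))`. -/
def kxF (St : Finset (ℤ × ℤ)) (w : ℤ × ℤ → ℂ) (x y : K) : IntermediateField ℂ K :=
  adjoin ℂ {x, stepEval St w x y}

/-- `k(y) = ℂ(y, S(x,y))`. -/
def kyF (St : Finset (ℤ × ℤ)) (w : ℤ × ℤ → ℂ) (x y : K) : IntermediateField ℂ K :=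
  adjoin ℂ {y, stepEval St w x y}

/-- `k(x,y) = ℂ(x,y)`. -/
def kxyF (x y : K) : IntermediateField ℂ K := adjoin ℂ {x, y}

/-- `k(𝒪)`: the subfield generated over `k` by all coordinates of the orbit. -/
def orbitF (St : Finset (ℤ × ℤ)) (w : ℤ × ℤ → ℂ) (x y : K) : IntermediateField ℂ K :=
  adjoin ℂ ({stepEval St w x y} ∪ {z | ∃ a ∈ orbit St w x y, z = a.1 ∨ z = a.2})

/-- The standing hypotheses: nonzero weights, a non-univariate step polynomial,
`x, y` algebraically independent over `ℂ`, and `𝕂` an algebraic closure of `ℂ(x,y)`. -/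
structure Setting (St : Finset (ℤ × ℤ)) (w : ℤ × ℤ → ℂ) (x y : K) : Prop where
  weight_ne : ∀ p ∈ St, w p ≠ 0
  notUniv : NotUnivariate St
  indep : AlgebraicIndependent ℂ ![x, y]
  algClosed : IsAlgClosed K
  algebraic : Algebra.IsAlgebraic (kxyF x y) K

lemma self_mem_orbit (St : Finset (ℤ × ℤ)) (w : ℤ × ℤ → ℂ) (x y : K) :
    (x, y) ∈ orbit St w x y := Relation.ReflTransGen.refl

lemma x_mem_orbitF (St : Finset (ℤ × ℤ)) (w : ℤ × ℤ → ℂ) (x y : K) :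
    x ∈ orbitF St w x y := by
  apply subset_adjoin
  exact Set.mem_union_right _ ⟨(x, y), self_mem_orbit St w x y, Or.inl rfl⟩

lemma y_mem_orbitF (St : Finset (ℤ × ℤ)) (w : ℤ × ℤ → ℂ) (x y : K) :
    y ∈ orbitF St w x y := by
  apply subset_adjoin
  exact Set.mem_union_right _ ⟨(x, y), self_mem_orbit St w x y, Or.inr rfl⟩

lemma S_mem_orbitF (St : Finset (ℤ × ℤ)) (w : ℤ × ℤ → ℂ) (x y : K) :
    stepEval St w x y ∈ orbitF St w x y := by
  apply subset_adjoin
  exact Set.mem_union_left _ rfl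

lemma x_mem_kxF (St : Finset (ℤ × ℤ)) (w : ℤ × ℤ → ℂ) (x y : K) :
    x ∈ kxF St w x y :=
  subset_adjoin ℂ _ (Set.mem_insert _ _)

lemma S_mem_kxF (St : Finset (ℤ × ℤ)) (w : ℤ × ℤ → ℂ) (x y : K) :
    stepEval St w x y ∈ kxF St w x y :=
  subset_adjoin ℂ _ (Set.mem_insert_of_mem _ rfl)

lemma y_mem_kyF (St : Finset (ℤ × ℤ)) (w : ℤ × ℤ → ℂ) (x y : K) :
    y ∈ kyF St w x y :=
  subset_adjoin ℂ _ (Set.mem_insert _ _)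

lemma S_mem_kyF (St : Finset (ℤ × ℤ)) (w : ℤ × ℤ → ℂ) (x y : K) :
    stepEval St w x y ∈ kyF St w x y :=
  subset_adjoin ℂ _ (Set.mem_insert_of_mem _ rfl)

/-- The subgroup of `ℂ`-automorphisms of `M` fixing the subfield `E` pointwise. -/
def fixingAuts (E M : IntermediateField ℂ K) : Subgroup (↥M ≃ₐ[ℂ] ↥M) where
  carrier := {σ | ∀ (z : K) (_ : z ∈ E) (hzM : z ∈ M), σ ⟨z, hzM⟩ = ⟨z, hzM⟩}
  one_mem' := fun _ _ _ => rfl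
  mul_mem' := by
    intro σ τ hσ hτ z hzE hzM
    show σ (τ ⟨z, hzM⟩) = ⟨z, hzM⟩
    rw [hτ z hzE hzM, hσ z hzE hzM]
  inv_mem' := by
    intro σ hσ z hzE hzM
    show σ.symm ⟨z, hzM⟩ = ⟨z, hzM⟩
    conv_lhs => rw [← hσ z hzE hzM]
    exact σ.symm_apply_apply _

/-- The Galois group `G_x = Gal(k(𝒪)|k(x))`. -/
def Gx (St : Finset (ℤ × ℤ)) (w : ℤ × ℤ → ℂ) (x y : K) :
    Subgroup (↥(orbitF St w x y) ≃ₐ[ℂ] ↥(orbitF St w x y)) :=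
  fixingAuts (kxF St w x y) (orbitF St w x y)

/-- The Galois group `G_y = Gal(k(𝒪)|k(y))`. -/
def Gy (St : Finset (ℤ × ℤ)) (w : ℤ × ℤ → ℂ) (x y : K) :
    Subgroup (↥(orbitF St w x y) ≃ₐ[ℂ] ↥(orbitF St w x y)) :=
  fixingAuts (kyF St w x y) (orbitF St w x y)

/-- The Galois group `G_{xy} = Gal(k(𝒪)|k(x,y))`. -/
def Gxy (St : Finset (ℤ × ℤ)) (w : ℤ × ℤ → ℂ) (x y : K) :
    Subgroup (↥(orbitF St w x y) ≃ₐ[ℂ] ↥(orbitF St w x y)) :=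
  fixingAuts (kxyF x y) (orbitF St w x y)

/-- Extend an automorphism of an intermediate field to a map on all of `K`
(by the identity outside). -/
def extendAut {M : IntermediateField ℂ K} (σ : ↥M ≃ₐ[ℂ] ↥M) (z : K) : K :=
  if h : z ∈ M then (σ ⟨z, h⟩ : K) else z

/-- The coordinate-wise action of an automorphism on a `0`-chain. -/
def actChain {M : IntermediateField ℂ K} (σ : ↥M ≃ₐ[ℂ] ↥M)
    (γ : (K × K) →₀ ℂ) : (K × K) →₀ ℂ :=
  Finsupp.mapDomain (Prod.map (extendAut σ) (extendAut σ)) γ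

/-- Evaluation of a polynomial `P(X,Y,t)` at `(u, v, 1/S(x,y))` for `(u,v) = a`. -/
def evalPt (St : Finset (ℤ × ℤ)) (w : ℤ × ℤ → ℂ) (x y : K)
    (P : MvPolynomial (Fin 3) ℂ) (a : K × K) : K :=
  MvPolynomial.aeval ![a.1, a.2, (stepEval St w x y)⁻¹] P

/-- Evaluation of a polynomial `P(X,Y,t)` at `(x, y, 1/S(x,y))`. -/
def evalXY (St : Finset (ℤ × ℤ)) (w : ℤ × ℤ → ℂ) (x y : K)
    (P : MvPolynomial (Fin 3) ℂ) : K :=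
  evalPt St w x y P (x, y)

/-- Evaluation of the fraction `A/B` at `(a.1, a.2, 1/S(x,y))`. -/
def fracEval (St : Finset (ℤ × ℤ)) (w : ℤ × ℤ → ℂ) (x y : K)
    (A B : MvPolynomial (Fin 3) ℂ) (a : K × K) : K :=
  evalPt St w x y A a / evalPt St w x y B a

/-- Evaluation (orbit sum) of the fraction `A/B` on a `0`-chain. -/
def chainEval (St : Finset (ℤ × ℤ)) (w : ℤ × ℤ → ℂ) (x y : K)
    (A B : MvPolynomial (Fin 3) ℂ) (γ : (K × K) →₀ ℂ) : K :=
  γ.sum fun a c => algebraMap ℂ K c * fracEval St w x y A B a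

/-- A `0`-chain cancels decoupled fractions: the orbit sum of every regular fraction
of the form `F(X,t) + G(Y,t)` on it vanishes. -/
def CancelsDecoupled (St : Finset (ℤ × ℤ)) (w : ℤ × ℤ → ℂ) (mx my : ℕ)
    (x y : K) (α : (K × K) →₀ ℂ) : Prop :=
  ∀ A₁ B₁ A₂ B₂ : MvPolynomial (Fin 3) ℂ,
    A₁ ∈ MvPolynomial.supported ℂ ({0, 2} : Set (Fin 3)) →
    B₁ ∈ MvPolynomial.supported ℂ ({0, 2} : Set (Fin 3)) →
    A₂ ∈ MvPolynomial.supported ℂ ({1, 2} : Set (Fin 3)) →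
    B₂ ∈ MvPolynomial.supported ℂ ({1, 2} : Set (Fin 3)) →
    ¬ kernelPoly St w mx my ∣ B₁ → ¬ kernelPoly St w mx my ∣ B₂ →
    (α.sum fun a c =>
      algebraMap ℂ K c * (fracEval St w x y A₁ B₁ a + fracEval St w x y A₂ B₂ a)) = 0

/-- The field of fractions `ℂ(X,Y,t)`. -/
abbrev FF : Type := FractionRing (MvPolynomial (Fin 3) ℂ)

/-- The inclusion of `ℂ[X,Y,t]` into `ℂ(X,Y,t)`. -/
def toFF (P : MvPolynomial (Fin 3) ℂ) : FF := algebraMap (MvPolynomial (Fin 3) ℂ) FF P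

/-- The regular fraction `A/B` admits a Galois decoupling:
`A/B = F + G + K̃·R` with `F ∈ ℂ(X,t)`, `G ∈ ℂ(Y,t)` and `R` regular. -/
def AdmitsDecoupling (St : Finset (ℤ × ℤ)) (w : ℤ × ℤ → ℂ) (mx my : ℕ)
    (A B : MvPolynomial (Fin 3) ℂ) : Prop :=
  ∃ F₁ F₂ G₁ G₂ R₁ R₂ : MvPolynomial (Fin 3) ℂ,
    F₁ ∈ MvPolynomial.supported ℂ ({0, 2} : Set (Fin 3)) ∧
    F₂ ∈ MvPolynomial.supported ℂ ({0, 2} : Set (Fin 3)) ∧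
    G₁ ∈ MvPolynomial.supported ℂ ({1, 2} : Set (Fin 3)) ∧
    G₂ ∈ MvPolynomial.supported ℂ ({1, 2} : Set (Fin 3)) ∧
    ¬ kernelPoly St w mx my ∣ F₂ ∧ ¬ kernelPoly St w mx my ∣ G₂ ∧
    ¬ kernelPoly St w mx my ∣ R₂ ∧
    toFF A / toFF B =
      toFF F₁ / toFF F₂ + toFF G₁ / toFF G₂ +
        toFF (kernelPoly St w mx my) * (toFF R₁ / toFF R₂)

/-- `(I, J) = (A/B, Cc/D)` is a pair of Galois invariants: `I - J = K̃·R` with `R` regular. -/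
def IsInvariantPair (St : Finset (ℤ × ℤ)) (w : ℤ × ℤ → ℂ) (mx my : ℕ)
    (A B Cc D : MvPolynomial (Fin 3) ℂ) : Prop :=
  ∃ R₁ R₂ : MvPolynomial (Fin 3) ℂ, ¬ kernelPoly St w mx my ∣ R₂ ∧
    toFF A / toFF B - toFF Cc / toFF D =
      toFF (kernelPoly St w mx my) * (toFF R₁ / toFF R₂)

/-- A constant pair of Galois invariants: both members are equivalent to a
common fraction `c ∈ ℂ(t)` modulo `K̃`. -/
def IsConstantPair (St : Finset (ℤ × ℤ)) (w : ℤ × ℤ → ℂ) (mx my : ℕ)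
    (A B Cc D : MvPolynomial (Fin 3) ℂ) : Prop :=
  IsInvariantPair St w mx my A B Cc D ∧
  ∃ c₁ c₂ : MvPolynomial (Fin 3) ℂ,
    c₁ ∈ MvPolynomial.supported ℂ ({2} : Set (Fin 3)) ∧
    c₂ ∈ MvPolynomial.supported ℂ ({2} : Set (Fin 3)) ∧ c₂ ≠ 0 ∧
    IsInvariantPair St w mx my A B c₁ c₂ ∧ IsInvariantPair St w mx my Cc D c₁ c₂

/-- `(γx, γy)` is a pseudo-decoupling of `(x,y)`. -/
def PseudoDecoupling (St : Finset (ℤ × ℤ)) (w : ℤ × ℤ → ℂ) (mx my : ℕ)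
    (x y : K) (γx γy : (K × K) →₀ ℂ) : Prop :=
  ∀ A B : MvPolynomial (Fin 3) ℂ, ¬ kernelPoly St w mx my ∣ B →
    AdmitsDecoupling St w mx my A B →
      fracEval St w x y A B (x, y) =
          chainEval St w x y A B γx + chainEval St w x y A B γy ∧
        chainEval St w x y A B γx ∈ kxF St w x y ∧
        chainEval St w x y A B γy ∈ kyF St w x y

/-- `(gx, gy, a)` is a decoupling of `(x,y)` in the orbit. -/
def IsDecoupling (St : Finset (ℤ × ℤ)) (w : ℤ × ℤ → ℂ) (mx my : ℕ)
    (x y : K) (gx gy a : (K × K) →₀ ℂ) : Prop :=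
  Finsupp.single (x, y) (1 : ℂ) = gx + gy + a ∧
  (∀ σ ∈ Gx St w x y, actChain σ gx = gx) ∧
  (∀ σ ∈ Gy St w x y, actChain σ gy = gy) ∧
  CancelsDecoupled St w mx my x y a

/-- The `x`-part of the boundary of a `1`-chain. -/
def boundaryX (St : Finset (ℤ × ℤ)) (w : ℤ × ℤ → ℂ)
    (c : ((K × K) × (K × K)) →₀ ℂ) : (K × K) →₀ ℂ :=
  c.sum fun e coeff =>
    if XAdj St w e.1 e.2 then
      coeff • (Finsupp.single e.2 (1 : ℂ) - Finsupp.single e.1 (1 : ℂ)) else 0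

/-- The `y`-part of the boundary of a `1`-chain. -/
def boundaryY (St : Finset (ℤ × ℤ)) (w : ℤ × ℤ → ℂ)
    (c : ((K × K) × (K × K)) →₀ ℂ) : (K × K) →₀ ℂ :=
  c.sum fun e coeff =>
    if YAdj St w e.1 e.2 then
      coeff • (Finsupp.single e.2 (1 : ℂ) - Finsupp.single e.1 (1 : ℂ)) else 0

/-- The `0`-chain induced by a bicolored loop. -/
def IsBicoloredChain (St : Finset (ℤ × ℤ)) (w : ℤ × ℤ → ℂ) (x y : K)
    (α : (K × K) →₀ ℂ) : Prop :=
  ∃ (n : ℕ) (b : ℕ → K × K), 0 < n ∧ b (2 * n) = b 0 ∧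
    (∀ j < 2 * n, b j ∈ orbit St w x y) ∧
    (∀ i < n, XAdj St w (b (2 * i)) (b (2 * i + 1)) ∧
      YAdj St w (b (2 * i + 1)) (b (2 * i + 2))) ∧
    α = ∑ j ∈ Finset.range (2 * n), ((-1 : ℂ) ^ (j + 1)) • Finsupp.single (b j) (1 : ℂ)

/-- The `0`-chain `ω = (1/|𝒪|) ∑_{a ∈ 𝒪} a`. -/
def omegaChain (St : Finset (ℤ × ℤ)) (w : ℤ × ℤ → ℂ) (x y : K)
    (h : (orbit St w x y).Finite) : (K × K) →₀ ℂ :=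
  ((h.toFinset.card : ℂ))⁻¹ • ∑ a ∈ h.toFinset, Finsupp.single a (1 : ℂ)

/-- The average `[G]·γ = (1/|G|) ∑_{σ ∈ G} σ·γ` of a `0`-chain under a group. -/
def groupAverage {M : IntermediateField ℂ K} (G : Subgroup (↥M ≃ₐ[ℂ] ↥M))
    (γ : (K × K) →₀ ℂ) : (K × K) →₀ ℂ :=
  ((Nat.card G : ℂ))⁻¹ • ∑ᶠ σ ∈ (G : Set (↥M ≃ₐ[ℂ] ↥M)), actChain σ γ

/-- `ℂ[X,t]` (two variables: `0` and `1`). -/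
abbrev MvP2 : Type := MvPolynomial (Fin 2) ℂ

/-- `ℂ(X,t)`, the fraction field of `ℂ[X,t]`. -/
abbrev CXt : Type := FractionRing MvP2

/-- Constants `ℂ → ℂ(X,t)`. -/
def cconst : ℂ →+* CXt := (algebraMap MvP2 CXt).comp (MvPolynomial.C)

/-- The first generator of `ℂ(X,t)`. -/
def gen0 : CXt := algebraMap MvP2 CXt (MvPolynomial.X 0)

/-- The second generator of `ℂ(X,t)`. -/
def gen1 : CXt := algebraMap MvP2 CXt (MvPolynomial.X 1)

/-- The kernel polynomial viewed as a polynomial in `Y` over `ℂ(X,t)`. -/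
def kernelInY (St : Finset (ℤ × ℤ)) (w : ℤ × ℤ → ℂ) (mx my : ℕ) :
    Polynomial CXt :=
  MvPolynomial.eval₂ ((Polynomial.C : CXt →+* Polynomial CXt).comp cconst)
    ![Polynomial.C gen0, Polynomial.X, Polynomial.C gen1]
    (kernelPoly St w mx my)

/-- The kernel polynomial viewed as a polynomial in `X` over `ℂ(Y,t)`. -/
def kernelInX (St : Finset (ℤ × ℤ)) (w : ℤ × ℤ → ℂ) (mx my : ℕ) :
    Polynomial CXt :=
  MvPolynomial.eval₂ ((Polynomial.C : CXt →+* Polynomial CXt).comp cconst)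
    ![Polynomial.X, Polynomial.C gen0, Polynomial.C gen1]
    (kernelPoly St w mx my)

/-- The kernel polynomial viewed as a polynomial in `X, Y` over `ℂ(t)`. -/
def kernelInXY (St : Finset (ℤ × ℤ)) (w : ℤ × ℤ → ℂ) (mx my : ℕ) :
    MvPolynomial (Fin 2) (RatFunc ℂ) :=
  MvPolynomial.eval₂
    ((MvPolynomial.C : RatFunc ℂ →+* MvPolynomial (Fin 2) (RatFunc ℂ)).comp
      (RatFunc.C : ℂ →+* RatFunc ℂ))
    ![MvPolynomial.X 0, MvPolynomial.X 1, MvPolynomial.C RatFunc.X]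
    (kernelPoly St w mx my)

/-- The specialization `K̃(x, Y, 1/S(x,y))` as a polynomial in `Y` over `k(x)`. -/
def kernelAtX (St : Finset (ℤ × ℤ)) (w : ℤ × ℤ → ℂ) (mx my : ℕ) (x y : K) :
    Polynomial ↥(kxF St w x y) :=
  MvPolynomial.aeval
    ![Polynomial.C (⟨x, x_mem_kxF St w x y⟩ : kxF St w x y), Polynomial.X,
      Polynomial.C (⟨(stepEval St w x y)⁻¹, inv_mem (S_mem_kxF St w x y)⟩ : kxF St w x y)]
    (kernelPoly St w mx my)

/-- The specialization `K̃(X, y, 1/S(x,y))` as a polynomial in `X` over `k(y)`. -/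
def kernelAtY (St : Finset (ℤ × ℤ)) (w : ℤ × ℤ → ℂ) (mx my : ℕ) (x y : K) :
    Polynomial ↥(kyF St w x y) :=
  MvPolynomial.aeval
    ![Polynomial.X, Polynomial.C (⟨y, y_mem_kyF St w x y⟩ : kyF St w x y),
      Polynomial.C (⟨(stepEval St w x y)⁻¹, inv_mem (S_mem_kyF St w x y)⟩ : kyF St w x y)]
    (kernelPoly St w mx my)

/-- Values of regular fractions with numerator and denominator supported on a set
of variables. -/
def regRange (St : Finset (ℤ × ℤ)) (w : ℤ × ℤ → ℂ) (x y : K) (mx my : ℕ)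
    (s : Set (Fin 3)) : Set K :=
  {z | ∃ A B : MvPolynomial (Fin 3) ℂ,
    A ∈ MvPolynomial.supported ℂ s ∧ B ∈ MvPolynomial.supported ℂ s ∧
    ¬ kernelPoly St w mx my ∣ B ∧ z = evalXY St w x y A / evalXY St w x y B}

end QuadrantWalk
namespace QuadrantWalk

/-! Two regular fractions agree modulo `K̃` exactly when they take the same value at any one point
of the orbit. Indeed every orbit point `(u, v)` is again an algebraically independent pair with
`S(u, v) = S(x, y)`, by the exchange property along adjacencies. Substituting
`t = X^mx Y^my / (X^mx Y^my S)` into `P ∈ ℂ[X, Y, t]` and clearing denominators leaves a polynomial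
in `X, Y`, so `P` vanishes at `(u, v, 1 / S(x, y))` if and only if `K̃ ∣ P`. Consequently a
decoupling of `H` is the same as writing `H_{(x,y)}` as the sum of an element of `k(x)` and one of
`k(y)`, and any such decoupling evaluates identically along the orbit, so that `H_α = 0`.

Conversely, an automorphism of `𝕂` over `k(x)` moves `(x, y)` to an adjacent pair, hence permutes
the orbit and restricts to an element of `G_x`. So the value on a `G_x`-invariant chain is fixed by
`Gal(𝕂 | k(x))`, and lies in `k(x)` by Galois theory in characteristic zero; likewise for `k(y)`. -/

section FieldTheory

variable {F L : Type*} [Field F] [Field L] [Algebra F L]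

theorem linearIndependent_zpow_of_transcendental {v : L} (hv : Transcendental F v) :
    LinearIndependent F (fun n : ℤ => v ^ n) := by
  have hv₀ : v ≠ 0 := fun h => hv (h ▸ isAlgebraic_zero)
  refine linearIndependent_iff'.mpr fun s c hc i hi => ?_
  obtain ⟨m, hm⟩ := s.bddBelow
  have hpow : ∀ j ∈ s, v ^ (j - m).toNat = v ^ j * v ^ (-m) := fun j hj => by
    rw [← zpow_natCast, ← zpow_add₀ hv₀, Int.toNat_of_nonneg (sub_nonneg.mpr (hm hj)),
      sub_eq_add_neg]
  have hp : ∑ j ∈ s, Polynomial.monomial (j - m).toNat (c j) = 0 := by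
    refine transcendental_iff.mp hv _ ?_
    calc Polynomial.aeval v (∑ j ∈ s, Polynomial.monomial (j - m).toNat (c j))
        = (∑ j ∈ s, c j • v ^ j) * v ^ (-m) := by
          rw [map_sum, Finset.sum_mul]
          refine Finset.sum_congr rfl fun j hj => ?_
          rw [Polynomial.aeval_monomial, hpow j hj, Algebra.smul_def, mul_assoc]
      _ = 0 := by rw [hc, zero_mul]
  have hcoeff := congrArg (Polynomial.coeff · (i - m).toNat) hp
  simp only [Polynomial.finsetSum_coeff, Polynomial.coeff_monomial, Polynomial.coeff_zero] at hcoeff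
  rwa [Finset.sum_eq_single_of_mem i hi, if_pos rfl] at hcoeff
  intro j hj hji
  have := hm hj
  have := hm hi
  exact if_neg (by omega)

theorem isAlgebraic_of_sum_zpow_mul_zpow_mem {ι : Type*} {s : Finset ι} {c : ι → F}
    {d e : ι → ℤ} (hc : ∀ i ∈ s, c i ≠ 0) (hde : Set.InjOn (fun i => (d i, e i)) s)
    (he : ∃ i ∈ s, e i ≠ 0) {E : IntermediateField F L} {u v : L} (hu : Transcendental F u)
    (huE : u ∈ E) (hE : ∑ i ∈ s, algebraMap F L (c i) * u ^ d i * v ^ e i ∈ E) :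
    IsAlgebraic E v := by
  by_contra hv
  obtain ⟨i₀, hi₀, he₀⟩ := he
  -- Otherwise the powers of `v` are independent over `E`, so the coefficient of `v ^ e i₀` is
  -- zero; that coefficient is a nonzero Laurent polynomial in the transcendental element `u`.
  let a : ι → E := fun i => algebraMap F E (c i) * ⟨u, huE⟩ ^ d i
  let z : E := ⟨_, hE⟩
  have hrel : ∑ i ∈ s, Finsupp.single (e i) (a i) = Finsupp.single 0 z := by
    apply linearIndependent_zpow_of_transcendental hv
    simp only [map_sum, Finsupp.linearCombination_single, zpow_zero]
    exact (mul_one _).symm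
  have hcoeff : ∑ i ∈ s with e i = e i₀, a i = 0 := by
    have := DFunLike.congr_fun hrel (e i₀)
    rwa [Finsupp.finsetSum_apply, Finsupp.single_eq_of_ne he₀,
      Finset.sum_congr rfl fun i _ => Finsupp.single_apply, ← Finset.sum_filter] at this
  have hinj : Set.InjOn d (s.filter (e · = e i₀)) := fun i hi j hj h => by
    rw [Finset.coe_filter] at hi hj
    exact hde hi.1 hj.1 (Prod.ext h (hi.2.trans hj.2.symm))
  have hsum : ∑ i ∈ s with e i = e i₀, c i • u ^ d i = 0 := by
    simpa only [a, map_sum, map_mul, map_zpow₀, map_zero, Algebra.smul_def,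
      ← IsScalarTower.algebraMap_apply, IntermediateField.algebraMap_apply] using
      congrArg (algebraMap E L) hcoeff
  exact hc i₀ hi₀ <| linearIndepOn_finset_iff.mp
    (LinearIndepOn.comp_of_image
      ((linearIndependent_zpow_of_transcendental hu).linearIndepOn _) hinj) c hsum i₀
    (Finset.mem_filter.mpr ⟨hi₀, rfl⟩)

theorem algebraicIndependent_pair_iff {u v : L} :
    AlgebraicIndependent F ![u, v] ↔ Transcendental F u ∧ Transcendental (adjoin F {u}) v := by
  have hfun : (fun o : Option (Fin 1) => o.elim v ![u]) ∘ finSuccEquivLast = ![u, v] := by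
    ext i
    fin_cases i <;> rfl
  rw [algebraicIndependent_equiv' finSuccEquivLast hfun, AlgebraicIndependent.option_iff,
    algebraicIndependent_iff_transcendental, Matrix.range_cons, Matrix.range_empty,
    Set.union_empty, Transcendental, Transcendental, Transcendental, isAlgebraic_adjoin_iff]

theorem algebraicIndependent_pair_swap {u v : L} (h : AlgebraicIndependent F ![u, v]) :
    AlgebraicIndependent F ![v, u] := by
  have := h.comp ![1, 0] (by decide)
  convert! this using 1
  ext i
  fin_cases i <;> rfl

theorem algebraicIndependent_pair_of_isAlgebraic {u v v' : L} (h : AlgebraicIndependent F ![u, v])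
    (hv : IsAlgebraic (adjoin F {u, v'}) v) : AlgebraicIndependent F ![u, v'] := by
  rw [algebraicIndependent_pair_iff] at h ⊢
  refine ⟨h.1, fun hv' => h.2 ?_⟩
  have hle : adjoin F {u, v'} ≤ (algebraicClosure (adjoin F {u}) L).restrictScalars F := by
    refine adjoin_le_iff.mpr (Set.pair_subset ?_ (mem_algebraicClosure_iff.mpr hv'))
    exact (algebraicClosure (adjoin F {u}) L).algebraMap_mem
      (⟨u, mem_adjoin_simple_self F u⟩ : adjoin F {u})
  have hv : IsAlgebraic (algebraicClosure (adjoin F {u}) L) v := hv.tower_top_of_subalgebra_le hle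
  exact hv.restrictScalars (adjoin F {u})

theorem isAlgebraic_of_isAlgebraic_adjoin {S : Set L} {E : IntermediateField F L}
    (hL : Algebra.IsAlgebraic (adjoin F S) L) (hS : ∀ z ∈ S, IsAlgebraic E z) :
    Algebra.IsAlgebraic E L := by
  have hle : adjoin F S ≤ (algebraicClosure E L).restrictScalars F :=
    adjoin_le_iff.mpr fun z hz => mem_algebraicClosure_iff.mpr (hS z hz)
  have : Algebra.IsAlgebraic (algebraicClosure E L) L :=
    ⟨fun z => (hL.isAlgebraic z).tower_top_of_subalgebra_le hle⟩
  exact Algebra.IsAlgebraic.trans E (algebraicClosure E L) L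

theorem adjoin_pair_inv_eq (u s : L) :
    adjoin F {u, s⁻¹} = adjoin F {u, s} := by
  apply le_antisymm <;> refine adjoin_le_iff.mpr (Set.pair_subset ?_ ?_)
  · exact subset_adjoin F _ (Set.mem_insert _ _)
  · exact inv_mem (subset_adjoin F _ (Set.mem_insert_of_mem _ rfl))
  · exact subset_adjoin F _ (Set.mem_insert _ _)
  · exact inv_mem_iff.mp (subset_adjoin F _ (Set.mem_insert_of_mem _ rfl))

theorem exists_aeval_div_aeval_of_mem_adjoin_image {σ : Type*} {v : σ → L} {s : Set σ} {z : L}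
    (hz : z ∈ adjoin F (v '' s)) :
    ∃ P ∈ MvPolynomial.supported F s, ∃ Q ∈ MvPolynomial.supported F s,
      MvPolynomial.aeval v Q ≠ 0 ∧ z = MvPolynomial.aeval v P / MvPolynomial.aeval v Q := by
  rw [Set.image_eq_range, mem_adjoin_range_iff] at hz
  obtain ⟨p, q, rfl⟩ := hz
  by_cases hq : MvPolynomial.aeval (fun i : s => v i) q = 0
  · exact ⟨0, zero_mem _, 1, one_mem _, by simp, by simp [hq]⟩
  have hmem : ∀ r : MvPolynomial s F, MvPolynomial.rename (↑) r ∈ MvPolynomial.supported F s :=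
    fun r => MvPolynomial.supported_eq_range_rename (R := F) s ▸ ⟨r, rfl⟩
  refine ⟨_, hmem p, _, hmem q, ?_, ?_⟩ <;> simp only [MvPolynomial.aeval_rename]
  exacts [hq, rfl]

theorem exists_algEquiv_coe_apply_eq {M : IntermediateField F L} (τ : L ≃ₐ[F] L)
    (h : M.map (τ : L →ₐ[F] L) = M) :
    ∃ σ : M ≃ₐ[F] M, ∀ z : M, (σ z : L) = τ z :=
  ⟨(IntermediateField.intermediateFieldMap τ M).trans (IntermediateField.equivOfEq h),
    fun _ => rfl⟩

end FieldTheory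

section Orbit

variable {K : Type} [Field K] [Algebra ℂ K] {St : Finset (ℤ × ℤ)} {w : ℤ × ℤ → ℂ} {x y : K}

theorem stepEval_mem {E : IntermediateField ℂ K} {u v : K} (hu : u ∈ E) (hv : v ∈ E) :
    stepEval St w u v ∈ E :=
  sum_mem fun _ _ => mul_mem (mul_mem (E.algebraMap_mem _) (zpow_mem hu _)) (zpow_mem hv _)

theorem exists_ne_zero_of_exists_ne {ι α : Type*} [Zero α] {s : Finset ι} {f : ι → α}
    (h : ∃ i ∈ s, ∃ j ∈ s, f i ≠ f j) : ∃ i ∈ s, f i ≠ 0 := by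
  obtain ⟨i, hi, j, hj, hij⟩ := h
  by_contra! h₀
  exact hij ((h₀ i hi).trans (h₀ j hj).symm)

theorem isAlgebraic_snd_of_stepEval_mem (hw : ∀ p ∈ St, w p ≠ 0)
    (hSt : ∃ p ∈ St, ∃ q ∈ St, p.2 ≠ q.2) {E : IntermediateField ℂ K} {u v : K}
    (hu : Transcendental ℂ u) (huE : u ∈ E) (hE : stepEval St w u v ∈ E) : IsAlgebraic E v :=
  isAlgebraic_of_sum_zpow_mul_zpow_mem hw (fun _ _ _ _ h => h)
    (exists_ne_zero_of_exists_ne hSt) hu huE hE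

theorem isAlgebraic_fst_of_stepEval_mem (hw : ∀ p ∈ St, w p ≠ 0)
    (hSt : ∃ p ∈ St, ∃ q ∈ St, p.1 ≠ q.1) {E : IntermediateField ℂ K} {u v : K}
    (hv : Transcendental ℂ v) (hvE : v ∈ E) (hE : stepEval St w u v ∈ E) : IsAlgebraic E u := by
  refine isAlgebraic_of_sum_zpow_mul_zpow_mem (d := Prod.snd) hw
    (fun _ _ _ _ h => Prod.swap_injective h) (exists_ne_zero_of_exists_ne hSt) hv hvE ?_
  simpa only [stepEval, mul_right_comm] using hE

theorem Setting.algebraicIndependent_of_adj (hset : Setting St w x y) {a b : K × K}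
    (ha : AlgebraicIndependent ℂ ![a.1, a.2]) (hab : Adj St w a b) :
    AlgebraicIndependent ℂ ![b.1, b.2] := by
  obtain ⟨u, v⟩ := a
  obtain ⟨u', v'⟩ := b
  rcases hab with ⟨rfl : u = u', hS⟩ | ⟨rfl : v = v', hS⟩
  · refine algebraicIndependent_pair_of_isAlgebraic ha
      (isAlgebraic_snd_of_stepEval_mem hset.weight_ne hset.notUniv.2 (ha.transcendental 0)
        (subset_adjoin _ _ (.inl rfl)) (hS ▸ stepEval_mem ?_ ?_))
    exacts [subset_adjoin _ _ (.inl rfl), subset_adjoin _ _ (.inr rfl)]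
  · refine algebraicIndependent_pair_swap (algebraicIndependent_pair_of_isAlgebraic
      (algebraicIndependent_pair_swap ha)
      (isAlgebraic_fst_of_stepEval_mem hset.weight_ne hset.notUniv.1 (ha.transcendental 1)
        (subset_adjoin _ _ (.inl rfl)) (hS ▸ stepEval_mem ?_ ?_)))
    exacts [subset_adjoin _ _ (.inr rfl), subset_adjoin _ _ (.inl rfl)]

theorem Setting.algebraicIndependent_of_mem_orbit (hset : Setting St w x y) {a : K × K}
    (ha : a ∈ orbit St w x y) : AlgebraicIndependent ℂ ![a.1, a.2] := by
  induction ha with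
  | refl => exact hset.indep
  | tail _ hadj ih => exact hset.algebraicIndependent_of_adj ih hadj

theorem stepEval_eq_of_mem_orbit {a : K × K} (ha : a ∈ orbit St w x y) :
    stepEval St w a.1 a.2 = stepEval St w x y := by
  induction ha with
  | refl => rfl
  | tail _ hadj ih => exact (hadj.elim And.right And.right).symm.trans ih

theorem Setting.stepEval_ne_zero (hset : Setting St w x y) : stepEval St w x y ≠ 0 := by
  intro hS
  refine (algebraicIndependent_pair_iff.mp hset.indep).2 ?_
  exact isAlgebraic_snd_of_stepEval_mem hset.weight_ne hset.notUniv.2 (hset.indep.transcendental 0)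
    (mem_adjoin_simple_self ℂ x) (hS ▸ zero_mem _)

theorem Setting.isAlgebraic_kxF (hset : Setting St w x y) :
    Algebra.IsAlgebraic (kxF St w x y) K := by
  have hx : IsAlgebraic (kxF St w x y) x :=
    isAlgebraic_algebraMap (⟨x, x_mem_kxF St w x y⟩ : kxF St w x y)
  have hy : IsAlgebraic (kxF St w x y) y :=
    isAlgebraic_snd_of_stepEval_mem hset.weight_ne hset.notUniv.2 (hset.indep.transcendental 0)
      (x_mem_kxF St w x y) (S_mem_kxF St w x y)
  refine isAlgebraic_of_isAlgebraic_adjoin hset.algebraic ?_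
  rintro z (rfl | rfl)
  exacts [hx, hy]

theorem Setting.isAlgebraic_kyF (hset : Setting St w x y) :
    Algebra.IsAlgebraic (kyF St w x y) K := by
  have hx : IsAlgebraic (kyF St w x y) x :=
    isAlgebraic_fst_of_stepEval_mem hset.weight_ne hset.notUniv.1 (hset.indep.transcendental 1)
      (y_mem_kyF St w x y) (S_mem_kyF St w x y)
  have hy : IsAlgebraic (kyF St w x y) y :=
    isAlgebraic_algebraMap (⟨y, y_mem_kyF St w x y⟩ : kyF St w x y)
  refine isAlgebraic_of_isAlgebraic_adjoin hset.algebraic ?_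
  rintro z (rfl | rfl)
  exacts [hx, hy]

end Orbit

section KernelPolynomial

-- Modulo `M - t * N` one has `t = M / N`, and `N ^ n` clears the denominators.
theorem exists_sub_mul_dvd_pow_mul_sub {k A : Type*} [CommSemiring k] [CommRing A] [Algebra k A]
    {R : Subalgebra k A} {t M N P : A} (hM : M ∈ R) (hN : N ∈ R)
    (hP : P ∈ Algebra.adjoin k (insert t (R : Set A))) :
    ∃ n : ℕ, ∃ Q ∈ R, M - t * N ∣ N ^ n * P - Q := by
  induction hP using Algebra.adjoin_induction with
  | mem r hr =>
    rcases hr with rfl | hr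
    · exact ⟨1, M, hM, -1, by ring⟩
    · exact ⟨0, r, hr, by simp⟩
  | algebraMap c => exact ⟨0, _, R.algebraMap_mem c, by simp⟩
  | add P P' _ _ hP hP' =>
    obtain ⟨n, Q, hQ, D, hD⟩ := hP
    obtain ⟨m, Q', hQ', D', hD'⟩ := hP'
    refine ⟨n + m, N ^ m * Q + N ^ n * Q',
      add_mem (mul_mem (pow_mem hN m) hQ) (mul_mem (pow_mem hN n) hQ'), N ^ m * D + N ^ n * D', ?_⟩
    linear_combination N ^ m * hD + N ^ n * hD'
  | mul P P' _ _ hP hP' =>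
    obtain ⟨n, Q, hQ, D, hD⟩ := hP
    obtain ⟨m, Q', hQ', D', hD'⟩ := hP'
    refine ⟨n + m, Q * Q', mul_mem hQ hQ', D * (N ^ m * P') + Q * D', ?_⟩
    linear_combination N ^ m * P' * hD + Q * hD'

theorem map_eq_zero_iff_sub_mul_dvd {k A B : Type*} [CommSemiring k] [CommRing A]
    [DecompositionMonoid A] [CommRing B] [Algebra k A] [Algebra k B] {R : Subalgebra k A}
    {t M N : A} (f : A →ₐ[k] B) (hM : M ∈ R) (hN : N ∈ R) (hMN : IsRelPrime M N)
    (hf : f (M - t * N) = 0) (hR : ∀ Q ∈ R, f Q = 0 → Q = 0) {P : A}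
    (hP : P ∈ Algebra.adjoin k (insert t (R : Set A))) :
    f P = 0 ↔ M - t * N ∣ P := by
  have hf_dvd : ∀ {P}, M - t * N ∣ P → f P = 0 := fun h => by
    simpa [hf] using map_dvd f h
  refine ⟨fun hfP => ?_, hf_dvd⟩
  obtain ⟨n, Q, hQ, hdvd⟩ := exists_sub_mul_dvd_pow_mul_sub hM hN hP
  have hQ₀ : Q = 0 := hR Q hQ (by simpa [hfP] using hf_dvd hdvd)
  rw [hQ₀, sub_zero] at hdvd
  have hrel : IsRelPrime (M - t * N) N := IsRelPrime.sub_mul_right_left_iff.mpr hMN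
  exact hrel.pow_right.dvd_of_dvd_mul_left hdvd

theorem not_X_dvd_of_coeff_ne_zero {σ R : Type*} [CommSemiring R] {P : MvPolynomial σ R} {i : σ}
    {m : σ →₀ ℕ} (hi : m i = 0) (hm : P.coeff m ≠ 0) : ¬ MvPolynomial.X i ∣ P := by
  rintro ⟨Q, rfl⟩
  exact hm (by rw [MvPolynomial.coeff_X_mul', if_neg (Finsupp.notMem_support_iff.mpr hi)])

variable {St : Finset (ℤ × ℤ)} {w : ℤ × ℤ → ℂ} {mx my : ℕ}

/-- The polynomial `X^mx * Y^my * S(X,Y)`, for which `K̃ = X^mx * Y^my - t * stepNumerator`. -/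
def stepNumerator (St : Finset (ℤ × ℤ)) (w : ℤ × ℤ → ℂ) (mx my : ℕ) : MvPolynomial (Fin 3) ℂ :=
  ∑ p ∈ St, MvPolynomial.C (w p) * MvPolynomial.X 0 ^ (p.1 + (mx : ℤ)).toNat *
    MvPolynomial.X 1 ^ (p.2 + (my : ℤ)).toNat

theorem kernelPoly_eq : kernelPoly St w mx my = MvPolynomial.X 0 ^ mx * MvPolynomial.X 1 ^ my -
    MvPolynomial.X 2 * stepNumerator St w mx my := rfl

theorem ExponentBounds.coeff_stepNumerator (hb : ExponentBounds St mx my) {p : ℤ × ℤ}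
    (hp : p ∈ St) :
    (stepNumerator St w mx my).coeff
      (Finsupp.single 0 (p.1 + (mx : ℤ)).toNat + Finsupp.single 1 (p.2 + (my : ℤ)).toNat) =
        w p := by
  have hmonomial : ∀ q : ℤ × ℤ, MvPolynomial.C (w q) * MvPolynomial.X 0 ^ (q.1 + (mx : ℤ)).toNat *
      MvPolynomial.X 1 ^ (q.2 + (my : ℤ)).toNat = MvPolynomial.monomial (Finsupp.single (0 : Fin 3)
        (q.1 + (mx : ℤ)).toNat + Finsupp.single 1 (q.2 + (my : ℤ)).toNat) (w q) := fun q => by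
    rw [MvPolynomial.C_mul_X_pow_eq_monomial, MvPolynomial.X_pow_eq_monomial,
      MvPolynomial.monomial_mul, mul_one]
  simp only [stepNumerator, hmonomial, MvPolynomial.coeff_sum]
  rw [Finset.sum_eq_single_of_mem p hp, MvPolynomial.coeff_monomial, if_pos rfl]
  refine fun q hq hqp => (MvPolynomial.coeff_monomial _ _ _).trans (if_neg fun h => hqp ?_)
  have h₀ : (q.1 + (mx : ℤ)).toNat = (p.1 + (mx : ℤ)).toNat := by
    simpa using DFunLike.congr_fun h 0
  have h₁ : (q.2 + (my : ℤ)).toNat = (p.2 + (my : ℤ)).toNat := by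
    simpa using DFunLike.congr_fun h 1
  have := hb.lowerX p hp; have := hb.lowerX q hq
  have := hb.lowerY p hp; have := hb.lowerY q hq
  exact Prod.ext (by omega) (by omega)

theorem ExponentBounds.isRelPrime_stepNumerator (hb : ExponentBounds St mx my)
    (hw : ∀ p ∈ St, w p ≠ 0) :
    IsRelPrime (MvPolynomial.X 0 ^ mx * MvPolynomial.X 1 ^ my) (stepNumerator St w mx my) := by
  obtain ⟨p, hp, hpx⟩ := hb.attainX
  obtain ⟨q, hq, hqy⟩ := hb.attainY
  have hX : ¬ MvPolynomial.X 0 ∣ stepNumerator St w mx my :=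
    not_X_dvd_of_coeff_ne_zero (by simp [hpx]) ((hb.coeff_stepNumerator hp).trans_ne (hw p hp))
  have hY : ¬ MvPolynomial.X 1 ∣ stepNumerator St w mx my :=
    not_X_dvd_of_coeff_ne_zero (by simp [hqy]) ((hb.coeff_stepNumerator hq).trans_ne (hw q hq))
  exact .mul_left (.pow_left (MvPolynomial.X_prime.irreducible.isRelPrime_iff_not_dvd.mpr hX))
    (.pow_left (MvPolynomial.X_prime.irreducible.isRelPrime_iff_not_dvd.mpr hY))

variable {K : Type} [Field K] [Algebra ℂ K] {x y : K}

theorem ExponentBounds.evalPt_stepNumerator (hb : ExponentBounds St mx my) {a : K × K}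
    (ha₁ : a.1 ≠ 0) (ha₂ : a.2 ≠ 0) :
    evalPt St w x y (stepNumerator St w mx my) a =
      a.1 ^ mx * a.2 ^ my * stepEval St w a.1 a.2 := by
  simp only [evalPt, stepNumerator, stepEval, map_sum, map_mul, map_pow, MvPolynomial.aeval_X,
    MvPolynomial.aeval_C, Finset.mul_sum]
  refine Finset.sum_congr rfl fun p hp => ?_
  have hpow : ∀ {z : K} {i : ℤ} {m : ℕ}, z ≠ 0 → -(m : ℤ) ≤ i →
      z ^ (i + (m : ℤ)).toNat = z ^ i * z ^ m := fun hz hi => by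
    rw [← zpow_natCast, Int.toNat_of_nonneg (by linarith), zpow_add₀ hz, zpow_natCast]
  simp only [hpow ha₁ (hb.lowerX p hp), hpow ha₂ (hb.lowerY p hp), Matrix.cons_val_zero,
    Matrix.cons_val_one]
  ring

theorem ExponentBounds.evalPt_kernelPoly (hb : ExponentBounds St mx my) {a : K × K}
    (ha₁ : a.1 ≠ 0) (ha₂ : a.2 ≠ 0) (hS : stepEval St w a.1 a.2 = stepEval St w x y)
    (hS₀ : stepEval St w x y ≠ 0) : evalPt St w x y (kernelPoly St w mx my) a = 0 := by
  have hK : evalPt St w x y (kernelPoly St w mx my) a =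
      a.1 ^ mx * a.2 ^ my -
        (stepEval St w x y)⁻¹ * evalPt St w x y (stepNumerator St w mx my) a := by
    simp [evalPt, kernelPoly_eq]
  rw [hK, hb.evalPt_stepNumerator ha₁ ha₂, hS]
  field_simp
  ring

theorem eq_zero_of_evalPt_eq_zero_of_mem_supported {a : K × K}
    (ha : AlgebraicIndependent ℂ ![a.1, a.2]) {P : MvPolynomial (Fin 3) ℂ}
    (hP : P ∈ MvPolynomial.supported ℂ {0, 1}) (h : evalPt St w x y P a = 0) : P = 0 := by
  let f : ({0, 1} : Set (Fin 3)) → Fin 2 := fun i => if i.1 = 0 then 0 else 1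
  have hf : Function.Injective f := by
    rintro ⟨i, rfl | rfl⟩ ⟨j, rfl | rfl⟩ <;> simp [f]
  refine algebraicIndependent_comp_subtype.mp ?_ P hP h
  convert! ha.comp f hf using 1
  ext ⟨i, rfl | rfl⟩ <;> simp [f]

theorem Setting.evalPt_eq_zero_iff (hset : Setting St w x y) (hb : ExponentBounds St mx my)
    {a : K × K} (ha : a ∈ orbit St w x y) {P : MvPolynomial (Fin 3) ℂ} :
    evalPt St w x y P a = 0 ↔ kernelPoly St w mx my ∣ P := by
  have hind := hset.algebraicIndependent_of_mem_orbit ha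
  have hK := hb.evalPt_kernelPoly (hind.ne_zero 0) (hind.ne_zero 1) (stepEval_eq_of_mem_orbit ha)
    hset.stepEval_ne_zero
  have hX : ∀ i ∈ ({0, 1} : Set (Fin 3)), MvPolynomial.X i ∈ MvPolynomial.supported ℂ {0, 1} :=
    fun i hi => MvPolynomial.X_mem_supported.mpr hi
  refine map_eq_zero_iff_sub_mul_dvd (R := MvPolynomial.supported ℂ {0, 1}) _
    (mul_mem (pow_mem (hX 0 (by simp)) _) (pow_mem (hX 1 (by simp)) _))
    (sum_mem fun p _ => mul_mem (mul_mem (Subalgebra.algebraMap_mem _ _)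
      (pow_mem (hX 0 (by simp)) _)) (pow_mem (hX 1 (by simp)) _))
    (hb.isRelPrime_stepNumerator hset.weight_ne) hK
    (fun Q hQ => eq_zero_of_evalPt_eq_zero_of_mem_supported hind hQ) ?_
  refine Algebra.adjoin_mono (s := Set.range MvPolynomial.X) (Set.range_subset_iff.mpr fun i => ?_)
    (MvPolynomial.adjoin_range_X (R := ℂ) (σ := Fin 3) ▸ Algebra.mem_top)
  fin_cases i
  exacts [.inr (hX 0 (by simp)), .inr (hX 1 (by simp)), .inl rfl]

end KernelPolynomial

section Evaluation

variable {K : Type} [Field K] [Algebra ℂ K] {St : Finset (ℤ × ℤ)} {w : ℤ × ℤ → ℂ} {x y : K}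
  {mx my : ℕ} {A B C D : MvPolynomial (Fin 3) ℂ}

theorem chainEval_add (γ₁ γ₂ : (K × K) →₀ ℂ) :
    chainEval St w x y A B (γ₁ + γ₂) =
      chainEval St w x y A B γ₁ + chainEval St w x y A B γ₂ :=
  Finsupp.sum_add_index' (fun _ => by simp) (fun _ _ _ => by rw [map_add, add_mul])

theorem chainEval_single_one (a : K × K) :
    chainEval St w x y A B (Finsupp.single a 1) = fracEval St w x y A B a := by
  simp [chainEval]

theorem fracEval_add_fracEval {a : K × K} (hB : evalPt St w x y B a ≠ 0)
    (hD : evalPt St w x y D a ≠ 0) : fracEval St w x y A B a + fracEval St w x y C D a =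
      fracEval St w x y (A * D + B * C) (B * D) a := by
  simp only [fracEval, div_add_div _ _ hB hD]
  simp only [evalPt, map_add, map_mul]

theorem toFF_injective : Function.Injective toFF :=
  IsFractionRing.injective (MvPolynomial (Fin 3) ℂ) FF

theorem toFF_ne_zero (hB : ¬ kernelPoly St w mx my ∣ B) : toFF B ≠ 0 := fun h =>
  hB (toFF_injective (h.trans (map_zero _).symm) ▸ dvd_zero _)

theorem Setting.kernelPoly_dvd_mul_iff (hset : Setting St w x y) (hb : ExponentBounds St mx my) :
    kernelPoly St w mx my ∣ A * B ↔ kernelPoly St w mx my ∣ A ∨ kernelPoly St w mx my ∣ B := by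
  simp only [← hset.evalPt_eq_zero_iff hb (self_mem_orbit St w x y), evalPt, map_mul,
    mul_eq_zero]

theorem isInvariantPair_iff_exists_mul_eq (hB : ¬ kernelPoly St w mx my ∣ B)
    (hD : ¬ kernelPoly St w mx my ∣ D) :
    IsInvariantPair St w mx my A B C D ↔
      ∃ R₁ R₂, ¬ kernelPoly St w mx my ∣ R₂ ∧
        (A * D - C * B) * R₂ = kernelPoly St w mx my * (R₁ * (B * D)) := by
  refine exists₂_congr fun R₁ R₂ => and_congr_right fun hR => ?_
  have hB' := toFF_ne_zero hB
  have hD' := toFF_ne_zero hD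
  rw [← toFF_injective.eq_iff, ← mul_div_assoc, div_sub_div _ _ hB' hD',
    div_eq_div_iff (mul_ne_zero hB' hD') (toFF_ne_zero hR)]
  simp only [toFF, map_mul, map_sub, mul_assoc, mul_comm (algebraMap _ FF B)]

theorem Setting.isInvariantPair_iff_dvd (hset : Setting St w x y)
    (hb : ExponentBounds St mx my) (hB : ¬ kernelPoly St w mx my ∣ B)
    (hD : ¬ kernelPoly St w mx my ∣ D) :
    IsInvariantPair St w mx my A B C D ↔ kernelPoly St w mx my ∣ A * D - C * B := by
  rw [isInvariantPair_iff_exists_mul_eq hB hD]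
  constructor
  · rintro ⟨R₁, R₂, hR₂, h⟩
    exact ((hset.kernelPoly_dvd_mul_iff hb).mp ⟨_, h⟩).resolve_right hR₂
  · rintro ⟨R, hR⟩
    have hBD : ¬ kernelPoly St w mx my ∣ B * D :=
      (hset.kernelPoly_dvd_mul_iff hb).not.mpr (not_or.mpr ⟨hB, hD⟩)
    exact ⟨R, B * D, hBD, by rw [hR, mul_assoc]⟩

theorem Setting.isInvariantPair_iff_fracEval_eq (hset : Setting St w x y)
    (hb : ExponentBounds St mx my) {a : K × K} (ha : a ∈ orbit St w x y)
    (hB : ¬ kernelPoly St w mx my ∣ B) (hD : ¬ kernelPoly St w mx my ∣ D) :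
    IsInvariantPair St w mx my A B C D ↔
      fracEval St w x y A B a = fracEval St w x y C D a := by
  have hzero {P} := hset.evalPt_eq_zero_iff hb ha (P := P)
  rw [hset.isInvariantPair_iff_dvd hb hB hD, fracEval, fracEval,
    div_eq_div_iff (mt hzero.mp hB) (mt hzero.mp hD), ← hzero]
  simp only [evalPt, map_sub, map_mul, sub_eq_zero]

theorem admitsDecoupling_iff_exists_isInvariantPair : AdmitsDecoupling St w mx my A B ↔
    ∃ F₁ F₂ G₁ G₂ : MvPolynomial (Fin 3) ℂ,
      (F₁ ∈ MvPolynomial.supported ℂ {0, 2} ∧ F₂ ∈ MvPolynomial.supported ℂ {0, 2} ∧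
        ¬ kernelPoly St w mx my ∣ F₂) ∧
      (G₁ ∈ MvPolynomial.supported ℂ {1, 2} ∧ G₂ ∈ MvPolynomial.supported ℂ {1, 2} ∧
        ¬ kernelPoly St w mx my ∣ G₂) ∧
      IsInvariantPair St w mx my A B (F₁ * G₂ + F₂ * G₁) (F₂ * G₂) := by
  have hdecoupling : ∀ {F₁ F₂ G₁ G₂ R : _}, toFF F₂ ≠ 0 → toFF G₂ ≠ 0 →
      (toFF A / toFF B = toFF F₁ / toFF F₂ + toFF G₁ / toFF G₂ + R ↔
        toFF A / toFF B - toFF (F₁ * G₂ + F₂ * G₁) / toFF (F₂ * G₂) = R) := fun hF hG => by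
    rw [div_add_div _ _ hF hG, sub_eq_iff_eq_add']
    simp only [toFF, map_add, map_mul]
  constructor
  · rintro ⟨F₁, F₂, G₁, G₂, R₁, R₂, hF₁, hF₂, hG₁, hG₂, hF, hG, hR, h⟩
    exact ⟨F₁, F₂, G₁, G₂, ⟨hF₁, hF₂, hF⟩, ⟨hG₁, hG₂, hG⟩, R₁, R₂, hR,
      (hdecoupling (toFF_ne_zero hF) (toFF_ne_zero hG)).mp h⟩
  · rintro ⟨F₁, F₂, G₁, G₂, ⟨hF₁, hF₂, hF⟩, ⟨hG₁, hG₂, hG⟩, R₁, R₂, hR, h⟩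
    exact ⟨F₁, F₂, G₁, G₂, R₁, R₂, hF₁, hF₂, hG₁, hG₂, hF, hG, hR,
      (hdecoupling (toFF_ne_zero hF) (toFF_ne_zero hG)).mpr h⟩

theorem Setting.isInvariantPair_add_iff (hset : Setting St w x y) (hb : ExponentBounds St mx my)
    {a : K × K} (ha : a ∈ orbit St w x y) (hB : ¬ kernelPoly St w mx my ∣ B)
    {F₁ F₂ G₁ G₂ : MvPolynomial (Fin 3) ℂ} (hF : ¬ kernelPoly St w mx my ∣ F₂)
    (hG : ¬ kernelPoly St w mx my ∣ G₂) :
    IsInvariantPair St w mx my A B (F₁ * G₂ + F₂ * G₁) (F₂ * G₂) ↔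
      fracEval St w x y A B a = fracEval St w x y F₁ F₂ a + fracEval St w x y G₁ G₂ a := by
  have hzero {P} := hset.evalPt_eq_zero_iff hb ha (P := P)
  rw [fracEval_add_fracEval (mt hzero.mp hF) (mt hzero.mp hG)]
  exact hset.isInvariantPair_iff_fracEval_eq hb ha hB
    ((hset.kernelPoly_dvd_mul_iff hb).not.mpr (not_or.mpr ⟨hF, hG⟩))

theorem CancelsDecoupled.chainEval_eq_zero (hset : Setting St w x y)
    (hb : ExponentBounds St mx my) {α : (K × K) →₀ ℂ} (hα : CancelsDecoupled St w mx my x y α)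
    (hsupp : ↑α.support ⊆ orbit St w x y) (hB : ¬ kernelPoly St w mx my ∣ B)
    (h : AdmitsDecoupling St w mx my A B) : chainEval St w x y A B α = 0 := by
  obtain ⟨F₁, F₂, G₁, G₂, ⟨hF₁, hF₂, hF⟩, ⟨hG₁, hG₂, hG⟩, hinv⟩ :=
    admitsDecoupling_iff_exists_isInvariantPair.mp h
  rw [← hα F₁ F₂ G₁ G₂ hF₁ hF₂ hG₁ hG₂ hF hG]
  exact Finset.sum_congr rfl fun a ha =>
    congrArg _ ((hset.isInvariantPair_add_iff hb (hsupp ha) hB hF hG).mp hinv)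

theorem Setting.exists_fracEval_eq_of_mem_adjoin_image (hset : Setting St w x y)
    (hb : ExponentBounds St mx my) {s : Set (Fin 3)} {z : K}
    (hz : z ∈ adjoin ℂ (![x, y, (stepEval St w x y)⁻¹] '' s)) :
    ∃ P Q, (P ∈ MvPolynomial.supported ℂ s ∧ Q ∈ MvPolynomial.supported ℂ s ∧
      ¬ kernelPoly St w mx my ∣ Q) ∧ z = fracEval St w x y P Q (x, y) := by
  obtain ⟨P, hP, Q, hQ, hQ₀, rfl⟩ := exists_aeval_div_aeval_of_mem_adjoin_image hz
  exact ⟨P, Q, ⟨hP, hQ, mt (hset.evalPt_eq_zero_iff hb (self_mem_orbit St w x y)).mpr hQ₀⟩, rfl⟩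

theorem kxF_eq_adjoin_image : kxF St w x y =
    adjoin ℂ (![x, y, (stepEval St w x y)⁻¹] '' {0, 2}) := by
  rw [Set.image_pair]
  exact (adjoin_pair_inv_eq _ _).symm

theorem kyF_eq_adjoin_image : kyF St w x y =
    adjoin ℂ (![x, y, (stepEval St w x y)⁻¹] '' {1, 2}) := by
  rw [Set.image_pair]
  exact (adjoin_pair_inv_eq _ _).symm

theorem Setting.admitsDecoupling_of_fracEval_eq_add (hset : Setting St w x y)
    (hb : ExponentBounds St mx my) (hB : ¬ kernelPoly St w mx my ∣ B) {f g : K}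
    (hf : f ∈ kxF St w x y) (hg : g ∈ kyF St w x y)
    (h : fracEval St w x y A B (x, y) = f + g) : AdmitsDecoupling St w mx my A B := by
  obtain ⟨F₁, F₂, hF, rfl⟩ :=
    hset.exists_fracEval_eq_of_mem_adjoin_image hb (kxF_eq_adjoin_image.le hf)
  obtain ⟨G₁, G₂, hG, rfl⟩ :=
    hset.exists_fracEval_eq_of_mem_adjoin_image hb (kyF_eq_adjoin_image.le hg)
  have hinv := (hset.isInvariantPair_add_iff hb (self_mem_orbit St w x y) hB hF.2.2 hG.2.2).mpr h
  exact admitsDecoupling_iff_exists_isInvariantPair.mpr ⟨F₁, F₂, G₁, G₂, hF, hG, hinv⟩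

end Evaluation

section Galois

variable {K : Type} [Field K] [Algebra ℂ K] {St : Finset (ℤ × ℤ)} {w : ℤ × ℤ → ℂ} {x y : K}
  {A B : MvPolynomial (Fin 3) ℂ} {a b : K × K} (τ : K ≃ₐ[ℂ] K)

theorem map_stepEval (u v : K) : τ (stepEval St w u v) = stepEval St w (τ u) (τ v) := by
  simp [stepEval]

theorem Adj.symm (h : Adj St w a b) : Adj St w b a :=
  h.imp (fun h => ⟨h.1.symm, h.2.symm⟩) (fun h => ⟨h.1.symm, h.2.symm⟩)

theorem Adj.map (h : Adj St w a b) : Adj St w (Prod.map τ τ a) (Prod.map τ τ b) := by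
  have hS (h : stepEval St w a.1 a.2 = stepEval St w b.1 b.2) :
      stepEval St w (τ a.1) (τ a.2) = stepEval St w (τ b.1) (τ b.2) := by
    rw [← map_stepEval, ← map_stepEval, h]
  exact h.imp (fun h => ⟨congrArg τ h.1, hS h.2⟩) (fun h => ⟨congrArg τ h.1, hS h.2⟩)

variable {τ}

theorem map_mem_orbit (hτ : Adj St w (x, y) (τ x, τ y)) (ha : a ∈ orbit St w x y) :
    Prod.map τ τ a ∈ orbit St w x y :=
  .head hτ (Relation.ReflTransGen.lift (p := Adj St w) (Prod.map τ τ) (fun _ _ => Adj.map τ)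
    (x, y) a ha)

theorem fst_mem_orbitF (ha : a ∈ orbit St w x y) : a.1 ∈ orbitF St w x y :=
  subset_adjoin ℂ _ (.inr ⟨a, ha, .inl rfl⟩)

theorem snd_mem_orbitF (ha : a ∈ orbit St w x y) : a.2 ∈ orbitF St w x y :=
  subset_adjoin ℂ _ (.inr ⟨a, ha, .inr rfl⟩)

theorem map_orbitF_le (hτ : Adj St w (x, y) (τ x, τ y)) :
    (orbitF St w x y).map (τ : K →ₐ[ℂ] K) ≤ orbitF St w x y := by
  rw [orbitF, adjoin_map, adjoin_le_iff]
  rintro _ ⟨z, rfl | ⟨a, ha, rfl | rfl⟩, rfl⟩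
  · have hS : τ (stepEval St w x y) = stepEval St w x y :=
      (map_stepEval τ x y).trans (hτ.elim And.right And.right).symm
    exact hS.symm ▸ S_mem_orbitF St w x y
  · exact fst_mem_orbitF (map_mem_orbit hτ ha)
  · exact snd_mem_orbitF (map_mem_orbit hτ ha)

theorem map_orbitF (hτ : Adj St w (x, y) (τ x, τ y)) :
    (orbitF St w x y).map (τ : K →ₐ[ℂ] K) = orbitF St w x y := by
  refine (map_orbitF_le hτ).antisymm fun z hz => ⟨τ.symm z, ?_, τ.apply_symm_apply z⟩
  have hτ' : Adj St w (x, y) (τ.symm x, τ.symm y) := by simpa using (hτ.map τ.symm).symm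
  exact map_orbitF_le hτ' ⟨z, hz, rfl⟩

theorem map_evalPt (hτ : τ (stepEval St w x y) = stepEval St w x y) :
    τ (evalPt St w x y A a) = evalPt St w x y A (Prod.map τ τ a) := by
  refine (MvPolynomial.comp_aeval_apply _ (τ : K →ₐ[ℂ] K) A).trans ?_
  rw [evalPt]
  congr 2
  ext i
  fin_cases i <;> simp [hτ]

theorem map_fracEval (hτ : τ (stepEval St w x y) = stepEval St w x y) :
    τ (fracEval St w x y A B a) = fracEval St w x y A B (Prod.map τ τ a) := by
  rw [fracEval, map_div₀, map_evalPt hτ, map_evalPt hτ, fracEval]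

theorem map_chainEval (hτ : τ (stepEval St w x y) = stepEval St w x y) (γ : (K × K) →₀ ℂ) :
    τ (chainEval St w x y A B γ) = chainEval St w x y A B (γ.mapDomain (Prod.map τ τ)) := by
  rw [chainEval, chainEval, Finsupp.sum_mapDomain_index (fun _ => by simp)
    (fun _ _ _ => by rw [map_add, add_mul]), map_finsuppSum]
  simp only [map_mul, AlgEquiv.commutes, map_fracEval hτ]

theorem actChain_eq_mapDomain {σ : orbitF St w x y ≃ₐ[ℂ] orbitF St w x y}
    (hσ : ∀ z, (σ z : K) = τ z) {γ : (K × K) →₀ ℂ} (hγ : ↑γ.support ⊆ orbit St w x y) :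
    actChain σ γ = γ.mapDomain (Prod.map τ τ) := by
  have hext : ∀ z ∈ orbitF St w x y, extendAut σ z = τ z := fun z hz =>
    (dif_pos hz).trans (hσ ⟨z, hz⟩)
  exact Finsupp.mapDomain_congr fun a ha =>
    Prod.ext (hext _ (fst_mem_orbitF (hγ ha))) (hext _ (snd_mem_orbitF (hγ ha)))

theorem chainEval_mem_of_actChain_eq [IsAlgClosed K] (E : IntermediateField ℂ K)
    [Algebra.IsAlgebraic E K] (hS : stepEval St w x y ∈ E)
    (hE : ∀ τ : K ≃ₐ[E] K, Adj St w (x, y) (τ x, τ y)) {γ : (K × K) →₀ ℂ}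
    (hγ : ↑γ.support ⊆ orbit St w x y)
    (hfix : ∀ σ ∈ fixingAuts E (orbitF St w x y), actChain σ γ = γ) :
    chainEval St w x y A B γ ∈ E := by
  have : IsAlgClosure E K := ⟨inferInstance, inferInstance⟩
  suffices hfixed : ∀ τ : K ≃ₐ[E] K, τ (chainEval St w x y A B γ) = chainEval St w x y A B γ by
    obtain ⟨z, hz⟩ := (InfiniteGalois.mem_range_algebraMap_iff_fixed _).mpr hfixed
    exact hz ▸ z.2
  intro τ
  obtain ⟨σ, hσ⟩ := exists_algEquiv_coe_apply_eq (τ.restrictScalars ℂ) (map_orbitF (hE τ))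
  have hσE : σ ∈ fixingAuts E (orbitF St w x y) := fun z hzE hzM =>
    Subtype.ext ((hσ _).trans (τ.commutes ⟨z, hzE⟩))
  calc τ (chainEval St w x y A B γ)
      = chainEval St w x y A B (γ.mapDomain (Prod.map τ τ)) :=
        map_chainEval (τ := τ.restrictScalars ℂ) (τ.commutes ⟨_, hS⟩) γ
    _ = chainEval St w x y A B (actChain σ γ) := by rw [actChain_eq_mapDomain hσ hγ]; rfl
    _ = chainEval St w x y A B γ := by rw [hfix σ hσE]

theorem stepEval_eq_of_mem {E : IntermediateField ℂ K} (hS : stepEval St w x y ∈ E)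
    (τ : K ≃ₐ[E] K) : stepEval St w x y = stepEval St w (τ x) (τ y) :=
  (τ.commutes ⟨_, hS⟩).symm.trans (map_stepEval (τ.restrictScalars ℂ) x y)

theorem Setting.chainEval_mem_kxF (hset : Setting St w x y) {γ : (K × K) →₀ ℂ}
    (hγ : ↑γ.support ⊆ orbit St w x y) (hfix : ∀ σ ∈ Gx St w x y, actChain σ γ = γ) :
    chainEval St w x y A B γ ∈ kxF St w x y := by
  have := hset.algClosed
  have := hset.isAlgebraic_kxF
  exact chainEval_mem_of_actChain_eq _ (S_mem_kxF St w x y) (fun τ =>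
    .inl ⟨(τ.commutes ⟨x, x_mem_kxF St w x y⟩).symm, stepEval_eq_of_mem (S_mem_kxF St w x y) τ⟩)
    hγ hfix

theorem Setting.chainEval_mem_kyF (hset : Setting St w x y) {γ : (K × K) →₀ ℂ}
    (hγ : ↑γ.support ⊆ orbit St w x y) (hfix : ∀ σ ∈ Gy St w x y, actChain σ γ = γ) :
    chainEval St w x y A B γ ∈ kyF St w x y := by
  have := hset.algClosed
  have := hset.isAlgebraic_kyF
  exact chainEval_mem_of_actChain_eq _ (S_mem_kyF St w x y) (fun τ =>
    .inr ⟨(τ.commutes ⟨y, y_mem_kyF St w x y⟩).symm, stepEval_eq_of_mem (S_mem_kyF St w x y) τ⟩)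
    hγ hfix

end Galois

/-- if `(x,y) = γ̃x + γ̃y + α` is a decoupling of `(x,y)` in the orbit
and `H = A/B` is a regular fraction, then the following are equivalent:
(1) `H` admits a Galois decoupling; (2) `H_α = 0`;
(3) `H_{(x,y)} = H_{γ̃x} + H_{γ̃y}` with `H_{γ̃x} ∈ k(x)` and `H_{γ̃y} ∈ k(y)`. -/
theorem stmt14 {K : Type} [Field K] [Algebra ℂ K]
    (St : Finset (ℤ × ℤ)) (w : ℤ × ℤ → ℂ) (x y : K) (mx my : ℕ)
    (hset : Setting St w x y) (hb : ExponentBounds St mx my)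
    (gx gy a : (K × K) →₀ ℂ)
    (hgx : ↑gx.support ⊆ orbit St w x y) (hgy : ↑gy.support ⊆ orbit St w x y)
    (ha : ↑a.support ⊆ orbit St w x y)
    (hdec : IsDecoupling St w mx my x y gx gy a)
    (A B : MvPolynomial (Fin 3) ℂ) (hB : ¬ kernelPoly St w mx my ∣ B) :
    (AdmitsDecoupling St w mx my A B ↔ chainEval St w x y A B a = 0) ∧
    (AdmitsDecoupling St w mx my A B ↔
      (fracEval St w x y A B (x, y) =
          chainEval St w x y A B gx + chainEval St w x y A B gy ∧
        chainEval St w x y A B gx ∈ kxF St w x y ∧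
        chainEval St w x y A B gy ∈ kyF St w x y)) := by
  obtain ⟨hsum, hfx, hfy, hcancel⟩ := hdec
  have hsplit : fracEval St w x y A B (x, y) = chainEval St w x y A B gx +
      chainEval St w x y A B gy + chainEval St w x y A B a := by
    rw [← chainEval_single_one, hsum, chainEval_add, chainEval_add]
  have hxF : chainEval St w x y A B gx ∈ kxF St w x y := hset.chainEval_mem_kxF hgx hfx
  have hyF : chainEval St w x y A B gy ∈ kyF St w x y := hset.chainEval_mem_kyF hgy hfy
  have hvalue : AdmitsDecoupling St w mx my A B ↔ chainEval St w x y A B a = 0 :=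
    ⟨hcancel.chainEval_eq_zero hset hb ha hB, fun h =>
      hset.admitsDecoupling_of_fracEval_eq_add hb hB hxF hyF (by rw [hsplit, h, add_zero])⟩
  exact ⟨hvalue, by rw [hvalue, hsplit, add_eq_left]; simp only [hxF, hyF, and_true]⟩

end QuadrantWalk
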